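/- Let n ≥ 3, q > 2/(n-2), 0 ≤ s < 1, q + s < n/(n-2), and let Γ(x) = ((n-2)ω_{n-1})^{-1}|x|^{2-n}. Then for every ω on the unit sphere in ℝⁿ, ∫_{ℝⁿ} Γ(ω - y) |y|^{(2s - q(n-2))/(1-s)} dy = (1-s)² / (((n-2)q - 2)(n - (n-2)(q+s))). -/

import Mathlib

open MeasureTheory

/-!
Feynman's parametrisation `p⁻ᵃ q⁻ᵇ = B(a, b)⁻¹ ∫₀^∞ wᵇ⁻¹ (p + w q)⁻⁽ᵃ⁺ᵇ⁾ dw`, applied with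
`p = ‖x - y‖²` and `q = ‖y‖²`, merges the two powers into a power of a single quadratic polynomial
in `y`. Completing the square makes the `y`-integral explicit, and what remains is again a beta
integral in `w`. This is the Riesz composition formula; for `a = d / 2 - 1` the first factor is the
Newtonian kernel, and the recurrence `Γ(z + 1) = z Γ(z)` collapses the Gamma factors.
-/

open Metric Module Set
open ProbabilityTheory (beta beta_pos)
open Real
open scoped ENNReal

section Mellin

variable {α : Type*} [MeasurableSpace α] {μ : Measure α}

lemma lintegral_ofReal_of_integral_ne_zero {f : α → ℝ} (hf : 0 ≤ᵐ[μ] f)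
    (hint : ∫ x, f x ∂μ ≠ 0) :
    ∫⁻ x, ENNReal.ofReal (f x) ∂μ = ENNReal.ofReal (∫ x, f x ∂μ) :=
  (ofReal_integral_eq_lintegral_ofReal (.of_integral_ne_zero hint) hf).symm

lemma lintegral_ofReal_const_mul {c : ℝ} (hc : 0 ≤ c) (f : α → ℝ) :
    ∫⁻ x, ENNReal.ofReal (c * f x) ∂μ =
      ENNReal.ofReal c * ∫⁻ x, ENNReal.ofReal (f x) ∂μ := by
  simp_rw [ENNReal.ofReal_mul hc]
  exact lintegral_const_mul' _ _ ENNReal.ofReal_ne_top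

lemma lintegral_rpow_mul_exp_neg_mul_Ioi {c r : ℝ} (hc : 0 < c) (hr : 0 < r) :
    ∫⁻ t in Ioi (0 : ℝ), ENNReal.ofReal (t ^ (c - 1) * exp (-(r * t))) =
      ENNReal.ofReal (Gamma c * r ^ (-c)) := by
  have hint : ∫ t in Ioi (0 : ℝ), t ^ (c - 1) * exp (-(r * t)) = Gamma c * r ^ (-c) := by
    rw [integral_rpow_mul_exp_neg_mul_Ioi hc hr, one_div, inv_rpow hr.le, rpow_neg hr.le, mul_comm]
  rw [← hint]
  refine lintegral_ofReal_of_integral_ne_zero ?_ (hint ▸ by positivity)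
  filter_upwards [self_mem_ae_restrict measurableSet_Ioi] with t (ht : 0 < t)
  positivity

lemma lintegral_mul_rpow_neg_eq_lintegral_laplace [SFinite μ] {g : α → ℝ≥0∞} {f : α → ℝ}
    (hg : Measurable g) (hf : Measurable f) (hf_pos : ∀ᵐ x ∂μ, 0 < f x) {c : ℝ} (hc : 0 < c) :
    ∫⁻ x, g x * ENNReal.ofReal (f x ^ (-c)) ∂μ =
      ENNReal.ofReal (Gamma c)⁻¹ * ∫⁻ t in Ioi (0 : ℝ), ENNReal.ofReal (t ^ (c - 1)) *
        ∫⁻ x, g x * ENNReal.ofReal (exp (-(f x * t))) ∂μ := by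
  have hΓ := Gamma_pos_of_pos hc
  have hsubordination : ∀ᵐ x ∂μ, g x * ENNReal.ofReal (f x ^ (-c)) =
      ENNReal.ofReal (Gamma c)⁻¹ * ∫⁻ t in Ioi (0 : ℝ),
        ENNReal.ofReal (t ^ (c - 1)) * (g x * ENNReal.ofReal (exp (-(f x * t)))) := by
    filter_upwards [hf_pos] with x hx
    have hfactor : ∀ t ∈ Ioi (0 : ℝ),
        ENNReal.ofReal (t ^ (c - 1)) * (g x * ENNReal.ofReal (exp (-(f x * t)))) =
          g x * ENNReal.ofReal (t ^ (c - 1) * exp (-(f x * t))) := fun t (ht : 0 < t) ↦ by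
      rw [mul_left_comm, ENNReal.ofReal_mul (by positivity)]
    rw [setLIntegral_congr_fun measurableSet_Ioi hfactor, lintegral_const_mul _ (by fun_prop),
      lintegral_rpow_mul_exp_neg_mul_Ioi hc hx, mul_left_comm,
      ← ENNReal.ofReal_mul (by positivity), inv_mul_cancel_left₀ hΓ.ne']
  rw [lintegral_congr_ae hsubordination, lintegral_const_mul' _ _ ENNReal.ofReal_ne_top,
    lintegral_lintegral_swap (by fun_prop)]
  congr 2 with t
  exact lintegral_const_mul' _ _ ENNReal.ofReal_ne_top

end Mellin

section Beta

variable {a b p q : ℝ}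

lemma lintegral_rpow_mul_exp_neg_add_mul_mul_Ioi {t : ℝ} (hb : 0 < b) (hq : 0 < q) (ht : 0 < t) :
    ∫⁻ w in Ioi (0 : ℝ), ENNReal.ofReal (w ^ (b - 1)) *
        ENNReal.ofReal (exp (-((p + w * q) * t))) =
      ENNReal.ofReal (exp (-(p * t)) * (Gamma b * (q * t) ^ (-b))) := by
  have hfactor : ∀ w ∈ Ioi (0 : ℝ), ENNReal.ofReal (w ^ (b - 1)) *
        ENNReal.ofReal (exp (-((p + w * q) * t))) =
      ENNReal.ofReal (exp (-(p * t)) * (w ^ (b - 1) * exp (-(q * t * w)))) :=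
    fun w (hw : 0 < w) ↦ by
      rw [← ENNReal.ofReal_mul (by positivity), mul_left_comm, ← exp_add]
      ring_nf
  rw [setLIntegral_congr_fun measurableSet_Ioi hfactor, lintegral_ofReal_const_mul (exp_nonneg _),
    lintegral_rpow_mul_exp_neg_mul_Ioi hb (by positivity), ← ENNReal.ofReal_mul (exp_nonneg _)]

lemma lintegral_rpow_mul_add_mul_rpow_neg_Ioi (ha : 0 < a) (hb : 0 < b) (hp : 0 < p)
    (hq : 0 < q) :
    ∫⁻ w in Ioi (0 : ℝ), ENNReal.ofReal (w ^ (b - 1)) *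
        ENNReal.ofReal ((p + w * q) ^ (-(a + b))) =
      ENNReal.ofReal (beta a b * (p ^ (-a) * q ^ (-b))) := by
  have hpos : ∀ᵐ w ∂volume.restrict (Ioi (0 : ℝ)), 0 < p + w * q := by
    filter_upwards [self_mem_ae_restrict measurableSet_Ioi] with w (hw : 0 < w)
    positivity
  have hlaplace : ∀ t ∈ Ioi (0 : ℝ), ENNReal.ofReal (t ^ (a + b - 1)) *
        ∫⁻ w in Ioi (0 : ℝ), ENNReal.ofReal (w ^ (b - 1)) *
          ENNReal.ofReal (exp (-((p + w * q) * t))) =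
      ENNReal.ofReal (Gamma b * q ^ (-b) * (t ^ (a - 1) * exp (-(p * t)))) :=
    fun t (ht : 0 < t) ↦ by
      rw [lintegral_rpow_mul_exp_neg_add_mul_mul_Ioi hb hq ht,
        ← ENNReal.ofReal_mul (by positivity), mul_rpow hq.le ht.le,
        show a - 1 = a + b - 1 + -b by ring, rpow_add ht (a + b - 1)]
      ring_nf
  rw [lintegral_mul_rpow_neg_eq_lintegral_laplace (by fun_prop) (by fun_prop) hpos (add_pos ha hb),
    setLIntegral_congr_fun measurableSet_Ioi hlaplace,
    lintegral_ofReal_const_mul (by positivity), lintegral_rpow_mul_exp_neg_mul_Ioi ha hp,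
    ← ENNReal.ofReal_mul (by positivity), ← ENNReal.ofReal_mul (by positivity), beta]
  congr 1
  ring

lemma ofReal_rpow_neg_mul_rpow_neg_eq_lintegral (ha : 0 < a) (hb : 0 < b) (hp : 0 < p)
    (hq : 0 < q) :
    ENNReal.ofReal (p ^ (-a) * q ^ (-b)) =
      ENNReal.ofReal (beta a b)⁻¹ * ∫⁻ w in Ioi (0 : ℝ), ENNReal.ofReal (w ^ (b - 1)) *
        ENNReal.ofReal ((p + w * q) ^ (-(a + b))) := by
  have hβ := beta_pos ha hb
  rw [lintegral_rpow_mul_add_mul_rpow_neg_Ioi ha hb hp hq, ← ENNReal.ofReal_mul (by positivity),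
    inv_mul_cancel_left₀ hβ.ne']

end Beta

section Riesz

variable {V : Type*} [NormedAddCommGroup V] [InnerProductSpace ℝ V]

lemma norm_sub_sq_add_mul_norm_sq (x y : V) {w : ℝ} (hw : 1 + w ≠ 0) :
    ‖x - y‖ ^ 2 + w * ‖y‖ ^ 2 =
      (1 + w) * (‖y - (1 + w)⁻¹ • x‖ ^ 2 + w / (1 + w) ^ 2 * ‖x‖ ^ 2) := by
  rw [norm_sub_sq_real, norm_sub_sq_real, inner_smul_right, norm_smul, real_inner_comm x y,
    mul_pow, norm_eq_abs, sq_abs]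
  field_simp
  ring

variable [FiniteDimensional ℝ V] [MeasurableSpace V] [BorelSpace V]

lemma lintegral_exp_neg_norm_sq_add_mul (m : ℝ) {t : ℝ} (ht : 0 < t) :
    ∫⁻ y : V, ENNReal.ofReal (exp (-((‖y‖ ^ 2 + m) * t))) =
      ENNReal.ofReal (exp (-(m * t)) * (π / t) ^ (finrank ℝ V / 2 : ℝ)) := by
  have hgauss := GaussianFourier.integral_rexp_neg_mul_sq_norm (V := V) ht
  have hfactor (y : V) : exp (-((‖y‖ ^ 2 + m) * t)) = exp (-(m * t)) * exp (-t * ‖y‖ ^ 2) := by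
    rw [← exp_add]
    ring_nf
  simp_rw [hfactor]
  rw [lintegral_ofReal_const_mul (exp_nonneg _), ENNReal.ofReal_mul (exp_nonneg _), ← hgauss,
    lintegral_ofReal_of_integral_ne_zero (.of_forall fun _ ↦ exp_nonneg _)
      (hgauss ▸ by positivity)]

lemma lintegral_norm_sq_add_rpow_neg {c m : ℝ} (hc : (finrank ℝ V / 2 : ℝ) < c) (hm : 0 < m) :
    ∫⁻ y : V, ENNReal.ofReal ((‖y‖ ^ 2 + m) ^ (-c)) =
      ENNReal.ofReal (π ^ (finrank ℝ V / 2 : ℝ) * Gamma (c - finrank ℝ V / 2) / Gamma c *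
        m ^ (finrank ℝ V / 2 - c)) := by
  set h : ℝ := finrank ℝ V / 2 with hh
  have hc0 : 0 < c := lt_of_le_of_lt (by positivity) hc
  have hlaplace : ∀ t ∈ Ioi (0 : ℝ), ENNReal.ofReal (t ^ (c - 1)) *
        ∫⁻ y : V, 1 * ENNReal.ofReal (exp (-((‖y‖ ^ 2 + m) * t))) =
      ENNReal.ofReal (π ^ h * (t ^ (c - h - 1) * exp (-(m * t)))) := fun t (ht : 0 < t) ↦ by
    simp_rw [one_mul]
    rw [lintegral_exp_neg_norm_sq_add_mul m ht, ← hh, ← ENNReal.ofReal_mul (by positivity),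
      div_rpow pi_nonneg ht.le, show c - h - 1 = c - 1 - h by ring, rpow_sub ht (c - 1)]
    ring_nf
  rw [← lintegral_congr fun _ ↦ one_mul _,
    lintegral_mul_rpow_neg_eq_lintegral_laplace measurable_const (by fun_prop)
      (.of_forall fun y ↦ by positivity) hc0,
    setLIntegral_congr_fun measurableSet_Ioi hlaplace, lintegral_ofReal_const_mul (by positivity),
    lintegral_rpow_mul_exp_neg_mul_Ioi (sub_pos.2 hc) hm, neg_sub,
    ← ENNReal.ofReal_mul (by positivity), ← ENNReal.ofReal_mul (by positivity)]
  congr 1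
  ring

lemma lintegral_norm_sub_sq_add_mul_norm_sq_rpow_neg {c w : ℝ} (hc : (finrank ℝ V / 2 : ℝ) < c)
    (hw : 0 < w) {x : V} (hx : x ≠ 0) :
    ∫⁻ y : V, ENNReal.ofReal ((‖x - y‖ ^ 2 + w * ‖y‖ ^ 2) ^ (-c)) =
      ENNReal.ofReal (π ^ (finrank ℝ V / 2 : ℝ) * Gamma (c - finrank ℝ V / 2) / Gamma c *
        ‖x‖ ^ (finrank ℝ V - 2 * c) *
        (w ^ (finrank ℝ V / 2 - c) * (1 + w) ^ (c - finrank ℝ V))) := by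
  have hx' : 0 < ‖x‖ := norm_pos_iff.2 hx
  have hw' : 0 < 1 + w := by positivity
  have hm : 0 < w / (1 + w) ^ 2 * ‖x‖ ^ 2 := by positivity
  have hsquare (y : V) : (‖x - y‖ ^ 2 + w * ‖y‖ ^ 2) ^ (-c) =
      (1 + w) ^ (-c) * (‖y - (1 + w)⁻¹ • x‖ ^ 2 + w / (1 + w) ^ 2 * ‖x‖ ^ 2) ^ (-c) := by
    rw [norm_sub_sq_add_mul_norm_sq x y hw'.ne', mul_rpow hw'.le (by positivity)]
  have hpowers : (1 + w) ^ (-c) * (w / (1 + w) ^ 2 * ‖x‖ ^ 2) ^ (finrank ℝ V / 2 - c) =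
      ‖x‖ ^ (finrank ℝ V - 2 * c) *
        (w ^ (finrank ℝ V / 2 - c) * (1 + w) ^ (c - finrank ℝ V)) := by
    rw [mul_rpow (by positivity) (by positivity), div_rpow hw.le (by positivity),
      ← rpow_natCast_mul hx'.le, ← rpow_natCast_mul hw'.le, div_eq_mul_inv, ← rpow_neg hw'.le,
      show c - (finrank ℝ V : ℝ) = -c + -((2 : ℕ) * (finrank ℝ V / 2 - c)) by push_cast; ring,
      rpow_add hw',
      show (finrank ℝ V : ℝ) - 2 * c = (2 : ℕ) * (finrank ℝ V / 2 - c) by push_cast; ring]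
    ring
  simp_rw [hsquare]
  rw [lintegral_ofReal_const_mul (by positivity),
    lintegral_sub_right_eq_self
      (fun y ↦ ENNReal.ofReal ((‖y‖ ^ 2 + w / (1 + w) ^ 2 * ‖x‖ ^ 2) ^ (-c))),
    lintegral_norm_sq_add_rpow_neg hc hm, ← ENNReal.ofReal_mul (by positivity),
    mul_left_comm, hpowers, mul_assoc]

variable {a b : ℝ}

lemma lintegral_norm_sub_rpow_mul_norm_rpow (ha : a < finrank ℝ V / 2)
    (hb : b < finrank ℝ V / 2) (hab : finrank ℝ V / 2 < a + b) {x : V} (hx : x ≠ 0) :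
    ∫⁻ y : V, ENNReal.ofReal (‖x - y‖ ^ (-2 * a) * ‖y‖ ^ (-2 * b)) =
      ENNReal.ofReal ((beta a b)⁻¹ *
        (π ^ (finrank ℝ V / 2 : ℝ) * Gamma (a + b - finrank ℝ V / 2) / Gamma (a + b) *
          ‖x‖ ^ (finrank ℝ V - 2 * (a + b)) *
          beta (finrank ℝ V / 2 - b) (finrank ℝ V / 2 - a))) := by
  have : Nontrivial V := nontrivial_of_ne x 0 hx
  have ha0 : 0 < a := by linarith
  have hb0 : 0 < b := by linarith
  have hβ := beta_pos ha0 hb0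
  have hfeynman : ∀ᵐ y : V, ENNReal.ofReal (‖x - y‖ ^ (-2 * a) * ‖y‖ ^ (-2 * b)) =
      ENNReal.ofReal (beta a b)⁻¹ * ∫⁻ w in Ioi (0 : ℝ), ENNReal.ofReal (w ^ (b - 1)) *
        ENNReal.ofReal ((‖x - y‖ ^ 2 + w * ‖y‖ ^ 2) ^ (-(a + b))) := by
    filter_upwards [volume.ae_ne x, volume.ae_ne 0] with y hyx hy0
    have hxy : 0 < ‖x - y‖ := norm_pos_iff.2 (sub_ne_zero.2 hyx.symm)
    have hy : 0 < ‖y‖ := norm_pos_iff.2 hy0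
    rw [← ofReal_rpow_neg_mul_rpow_neg_eq_lintegral ha0 hb0 (by positivity) (by positivity),
      ← rpow_natCast_mul hxy.le, ← rpow_natCast_mul hy.le]
    push_cast
    ring_nf
  set K : ℝ := π ^ (finrank ℝ V / 2 : ℝ) * Gamma (a + b - finrank ℝ V / 2) / Gamma (a + b) *
    ‖x‖ ^ (finrank ℝ V - 2 * (a + b)) with hK
  have hinner : ∀ w ∈ Ioi (0 : ℝ), ∫⁻ y : V, ENNReal.ofReal (w ^ (b - 1)) *
        ENNReal.ofReal ((‖x - y‖ ^ 2 + w * ‖y‖ ^ 2) ^ (-(a + b))) =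
      ENNReal.ofReal K * (ENNReal.ofReal (w ^ (finrank ℝ V / 2 - a - 1)) * ENNReal.ofReal
        ((1 + w * 1) ^ (-(finrank ℝ V / 2 - b + (finrank ℝ V / 2 - a))))) := fun w (hw : 0 < w) ↦ by
    rw [lintegral_const_mul' _ _ ENNReal.ofReal_ne_top,
      lintegral_norm_sub_sq_add_mul_norm_sq_rpow_neg hab hw hx, ← hK,
      ← ENNReal.ofReal_mul (by positivity), ← ENNReal.ofReal_mul (by positivity),
      ← ENNReal.ofReal_mul (by positivity),
      show (finrank ℝ V / 2 - a - 1 : ℝ) = b - 1 + (finrank ℝ V / 2 - (a + b)) by ring,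
      rpow_add hw]
    ring_nf
  rw [lintegral_congr_ae hfeynman, lintegral_const_mul' _ _ ENNReal.ofReal_ne_top,
    lintegral_lintegral_swap (by fun_prop), setLIntegral_congr_fun measurableSet_Ioi hinner,
    lintegral_const_mul' _ _ ENNReal.ofReal_ne_top,
    lintegral_rpow_mul_add_mul_rpow_neg_Ioi (sub_pos.2 hb) (sub_pos.2 ha) one_pos one_pos,
    ← ENNReal.ofReal_mul (by positivity), ← ENNReal.ofReal_mul (by positivity), one_rpow, one_rpow,
    mul_one, mul_one]

theorem integral_norm_sub_rpow_mul_norm_rpow (ha : a < finrank ℝ V / 2)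
    (hb : b < finrank ℝ V / 2) (hab : finrank ℝ V / 2 < a + b) {x : V} (hx : x ≠ 0) :
    ∫ y : V, ‖x - y‖ ^ (-2 * a) * ‖y‖ ^ (-2 * b) =
      π ^ (finrank ℝ V / 2 : ℝ) *
        (Gamma (finrank ℝ V / 2 - a) * Gamma (finrank ℝ V / 2 - b) *
          Gamma (a + b - finrank ℝ V / 2)) /
        (Gamma a * Gamma b * Gamma (finrank ℝ V - a - b)) *
        ‖x‖ ^ (finrank ℝ V - 2 * (a + b)) := by
  have ha0 : 0 < a := by linarith
  have hb0 : 0 < b := by linarith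
  have hβ := beta_pos ha0 hb0
  have hβ' := beta_pos (sub_pos.2 hb) (sub_pos.2 ha)
  rw [integral_eq_lintegral_of_nonneg_ae (.of_forall fun y ↦ by positivity) (by fun_prop),
    lintegral_norm_sub_rpow_mul_norm_rpow ha hb hab hx, ENNReal.toReal_ofReal (by positivity),
    beta, beta,
    show (finrank ℝ V / 2 - b + (finrank ℝ V / 2 - a) : ℝ) = finrank ℝ V - a - b by ring]
  field_simp

end Riesz

section Newton

variable {V : Type*} [NormedAddCommGroup V] [InnerProductSpace ℝ V] [FiniteDimensional ℝ V]
  [MeasurableSpace V] [BorelSpace V]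

variable (V) in
lemma finrank_sub_two_mul_area_unitSphere (hV : 2 < finrank ℝ V) :
    ((finrank ℝ V : ℝ) - 2) * (finrank ℝ V * volume.real (ball (0 : V) 1)) =
      4 * π ^ (finrank ℝ V / 2 : ℝ) / Gamma (finrank ℝ V / 2 - 1) := by
  have : Nontrivial V := nontrivial_of_finrank_pos (R := ℝ) (by lia)
  have hd : (2 : ℝ) < finrank ℝ V := by exact_mod_cast hV
  have hd' : (finrank ℝ V : ℝ) - 2 ≠ 0 := by linarith
  have hhalf : (finrank ℝ V / 2 - 1 : ℝ) ≠ 0 := by linarith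
  have hΓ_rec : Gamma (finrank ℝ V / 2 + 1) =
      finrank ℝ V / 2 * ((finrank ℝ V / 2 - 1) * Gamma (finrank ℝ V / 2 - 1)) := by
    rw [Gamma_add_one (by positivity), ← Gamma_add_one hhalf, sub_add_cancel]
  have hvol : volume.real (ball (0 : V) 1) =
      π ^ (finrank ℝ V / 2 : ℝ) / Gamma (finrank ℝ V / 2 + 1) := by
    rw [Measure.real, InnerProductSpace.volume_ball, ENNReal.ofReal_one, one_pow, one_mul,
      ENNReal.toReal_ofReal (by positivity), sqrt_eq_rpow, ← rpow_mul_natCast pi_nonneg,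
      one_div_mul_eq_div]
  rw [hvol, hΓ_rec]
  field_simp
  ring

variable {p : ℝ} {x : V}

lemma integral_norm_sub_rpow_two_sub_finrank_mul_norm_rpow_neg (hp : 2 < p)
    (hpV : p < finrank ℝ V) (hx : x ≠ 0) :
    ∫ y : V, ‖x - y‖ ^ (2 - (finrank ℝ V : ℝ)) * ‖y‖ ^ (-p) =
      4 * π ^ (finrank ℝ V / 2 : ℝ) / Gamma (finrank ℝ V / 2 - 1) *
        (‖x‖ ^ (2 - p) / ((p - 2) * (finrank ℝ V - p))) := by
  have hΓp : 0 < Gamma (p / 2 - 1) := Gamma_pos_of_pos (by linarith)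
  have hΓpV : 0 < Gamma (finrank ℝ V / 2 - p / 2) := Gamma_pos_of_pos (by linarith)
  have hp_half : p / 2 - 1 ≠ 0 := by linarith
  have hpV_half : (finrank ℝ V / 2 - p / 2 : ℝ) ≠ 0 := by linarith
  have hΓp_rec : Gamma (p / 2) = (p / 2 - 1) * Gamma (p / 2 - 1) := by
    rw [← Gamma_add_one hp_half, sub_add_cancel]
  have hriesz := integral_norm_sub_rpow_mul_norm_rpow (a := finrank ℝ V / 2 - 1) (b := p / 2)
    (by linarith) (by linarith) (by linarith) hx
  rw [show -2 * (finrank ℝ V / 2 - 1 : ℝ) = 2 - finrank ℝ V by ring,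
    show -2 * (p / 2) = -p by ring, sub_sub_cancel, Gamma_one, one_mul,
    show (finrank ℝ V / 2 - 1 + p / 2 - finrank ℝ V / 2 : ℝ) = p / 2 - 1 by ring,
    show (finrank ℝ V - (finrank ℝ V / 2 - 1) - p / 2 : ℝ) = finrank ℝ V / 2 - p / 2 + 1 by ring,
    show (finrank ℝ V - 2 * (finrank ℝ V / 2 - 1 + p / 2) : ℝ) = 2 - p by ring,
    Gamma_add_one hpV_half, hΓp_rec] at hriesz
  rw [hriesz, show p - 2 = 2 * (p / 2 - 1) by ring,
    show (finrank ℝ V - p : ℝ) = 2 * (finrank ℝ V / 2 - p / 2) by ring]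
  generalize finrank ℝ V / 2 - p / 2 = u, p / 2 - 1 = v at *
  field_simp
  ring

variable (V) in
/-- The fundamental solution of `-Δ` on a Euclidean space `V` of dimension at least three. The area
of the unit sphere is encoded as `dim V` times the volume of the unit ball; at the origin the value
is `0`, because `0 ^ r = 0` for `r ≠ 0`. -/
noncomputable def newtonianKernel (x : V) : ℝ :=
  (((finrank ℝ V : ℝ) - 2) * (finrank ℝ V * volume.real (ball (0 : V) 1)))⁻¹ *
    ‖x‖ ^ (2 - (finrank ℝ V : ℝ))

theorem integral_newtonianKernel_sub_mul_norm_rpow_neg (hp : 2 < p) (hpV : p < finrank ℝ V)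
    (hx : x ≠ 0) :
    ∫ y, newtonianKernel V (x - y) * ‖y‖ ^ (-p) =
      ‖x‖ ^ (2 - p) / ((p - 2) * (finrank ℝ V - p)) := by
  have : 0 < Gamma (finrank ℝ V / 2 - 1) := Gamma_pos_of_pos (by linarith)
  simp_rw [newtonianKernel, mul_assoc]
  rw [integral_const_mul, integral_norm_sub_rpow_two_sub_finrank_mul_norm_rpow_neg hp hpV hx,
    finrank_sub_two_mul_area_unitSphere V (by exact_mod_cast hp.trans hpV),
    inv_mul_cancel_left₀ (by positivity)]

end Newton

theorem stmt_14_general {V : Type*} [NormedAddCommGroup V] [InnerProductSpace ℝ V]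
    [FiniteDimensional ℝ V] [MeasurableSpace V] [BorelSpace V] {n : ℕ} (hV : finrank ℝ V = n)
    (hn : 3 ≤ n) {q s : ℝ} (hq : 2 / ((n : ℝ) - 2) < q) (hqs : q + s < (n : ℝ) / (n - 2))
    {ω' : ℝ} (hω' : ω' = n * (volume (ball (0 : V) 1)).toReal) {Γ : V → ℝ}
    (hΓ : ∀ x : V, x ≠ 0 → Γ x = (((n : ℝ) - 2) * ω')⁻¹ * ‖x‖ ^ (2 - (n : ℝ)))
    {x : V} (hx : x ≠ 0) :
    ∫ y, Γ (x - y) * ‖y‖ ^ ((2 * s - q * ((n : ℝ) - 2)) / (1 - s)) =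
      (1 - s) ^ 2 / ((((n : ℝ) - 2) * q - 2) * ((n : ℝ) - ((n : ℝ) - 2) * (q + s))) *
        ‖x‖ ^ ((2 - ((n : ℝ) - 2) * q) / (1 - s)) := by
  subst hV
  have : Nontrivial V := nontrivial_of_ne x 0 hx
  have hn2 : 0 < (finrank ℝ V : ℝ) - 2 := sub_pos.2 (by exact_mod_cast hn)
  rw [div_lt_iff₀ hn2] at hq
  rw [lt_div_iff₀ hn2] at hqs
  have hs : 0 < 1 - s := pos_of_mul_pos_left (by linarith) hn2.le
  obtain ⟨p, hp⟩ : ∃ p, p = (q * ((finrank ℝ V : ℝ) - 2) - 2 * s) / (1 - s) := ⟨_, rfl⟩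
  have hp2 : p - 2 = (((finrank ℝ V : ℝ) - 2) * q - 2) / (1 - s) := by rw [hp]; field
  have hpV : finrank ℝ V - p = (finrank ℝ V - ((finrank ℝ V : ℝ) - 2) * (q + s)) / (1 - s) := by
    rw [hp]; field
  have hkernel : ∀ᵐ y, Γ (x - y) * ‖y‖ ^ (-p) = newtonianKernel V (x - y) * ‖y‖ ^ (-p) := by
    filter_upwards [volume.ae_ne x] with y hy
    rw [hΓ _ (sub_ne_zero.2 hy.symm), hω', newtonianKernel, Measure.real]
  rw [← neg_sub (q * _), neg_div, ← hp, integral_congr_ae hkernel,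
    integral_newtonianKernel_sub_mul_norm_rpow_neg (sub_pos.1 <| hp2 ▸ div_pos (by linarith) hs)
      (sub_pos.1 <| hpV ▸ div_pos (by linarith) hs) hx, ← neg_sub p 2, hpV, hp2, ← neg_div, neg_sub]
  field

theorem stmt_14 (n : ℕ) (hn : 3 ≤ n) (q s : ℝ)
    (hq : 2 / ((n : ℝ) - 2) < q) (hs0 : 0 ≤ s) (hs1 : s < 1)
    (hqs : q + s < (n : ℝ) / (n - 2))
    (ω' : ℝ)
    (hω' : ω' = n * (volume (Metric.ball (0 : EuclideanSpace ℝ (Fin n)) 1)).toReal)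
    (Γ : EuclideanSpace ℝ (Fin n) → ℝ)
    (hΓ : ∀ x : EuclideanSpace ℝ (Fin n), x ≠ 0 →
      Γ x = (((n : ℝ) - 2) * ω')⁻¹ * ‖x‖ ^ (2 - (n : ℝ))) :
    ∀ ω : EuclideanSpace ℝ (Fin n), ‖ω‖ = 1 →
      ∫ y, Γ (ω - y) * ‖y‖ ^ ((2 * s - q * ((n : ℝ) - 2)) / (1 - s)) =
        (1 - s) ^ 2 / ((((n : ℝ) - 2) * q - 2) * ((n : ℝ) - ((n : ℝ) - 2) * (q + s))) := by
  intro ω hω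
  simpa only [hω, one_rpow, mul_one] using stmt_14_general finrank_euclideanSpace_fin hn hq hqs
    hω' hΓ (norm_ne_zero_iff.1 (hω.trans_ne one_ne_zero))
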